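/- Let i denote the imaginary unit. Then (1/2) · ∫_{-∞}^{∞} (ξ² − 4iξ − 3) / ((ξ − i)⁴ (1 + ξ²)²) dξ = −(9/32)π. -/

import Mathlib

open Complex MeasureTheory

/-!
The integrand splits into partial fractions at `±i`. A term `(ξ ∓ i)⁻ᵏ` with `k ≥ 2` has a
primitive vanishing at both ends of the real line, so it integrates to zero. The two simple poles
have opposite residues, because the integrand decays faster than `ξ⁻¹`; they combine into
`-(9/16) (1 + ξ²)⁻¹`, whose integral is `-(9/16) π`.
-/

open Filter Polynomial Topology

section NonrealPole

variable {z : ℂ}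

lemma ofReal_sub_ne_zero (hz : z.im ≠ 0) (x : ℝ) : (x : ℂ) - z ≠ 0 := fun h =>
  hz <| by simpa using congrArg im h

lemma tendsto_inv_ofReal_sub_cocompact (z : ℂ) :
    Tendsto (fun x : ℝ => ((x : ℂ) - z)⁻¹) (cocompact ℝ) (𝓝 0) := by
  rw [← Metric.cobounded_eq_cocompact]
  exact tendsto_inv₀_cobounded.comp <|
    (tendsto_sub_const_cobounded z).comp (RCLike.tendsto_ofReal_cobounded_cobounded ℂ)

lemma continuous_inv_ofReal_sub (hz : z.im ≠ 0) : Continuous fun x : ℝ => ((x : ℂ) - z)⁻¹ :=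
  (continuous_ofReal.sub continuous_const).inv₀ (ofReal_sub_ne_zero hz)

lemma norm_inv_ofReal_sub_le (hz : z.im ≠ 0) (x : ℝ) : ‖((x : ℂ) - z)⁻¹‖ ≤ |z.im|⁻¹ := by
  rw [norm_inv]
  refine inv_anti₀ (abs_pos.mpr hz) ?_
  simpa using abs_im_le_norm ((x : ℂ) - z)

lemma norm_inv_ofReal_sub_sq (hz : z.im ≠ 0) (x : ℝ) :
    ‖((x : ℂ) - z)⁻¹ ^ 2‖ = (z.im ^ 2)⁻¹ * (1 + ((x - z.re) / z.im) ^ 2)⁻¹ := by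
  rw [norm_pow, norm_inv, inv_pow, Complex.sq_norm, normSq_apply, ← mul_inv]
  congr 1
  simp only [sub_re, ofReal_re, sub_im, ofReal_im]
  field_simp
  ring

lemma integrable_inv_ofReal_sub_sq (hz : z.im ≠ 0) :
    Integrable fun x : ℝ => ((x : ℂ) - z)⁻¹ ^ 2 := by
  have hmeas : AEStronglyMeasurable fun x : ℝ => ((x : ℂ) - z)⁻¹ ^ 2 :=
    ((continuous_inv_ofReal_sub hz).pow 2).aestronglyMeasurable
  rw [← integrable_norm_iff hmeas]
  simp only [norm_inv_ofReal_sub_sq hz]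
  exact ((integrable_inv_one_add_sq.comp_div hz).comp_sub_right z.re).const_mul _

lemma integrable_inv_ofReal_sub_pow_add_two (hz : z.im ≠ 0) (n : ℕ) :
    Integrable fun x : ℝ => ((x : ℂ) - z)⁻¹ ^ (n + 2) := by
  have hbound (x : ℝ) : ‖((x : ℂ) - z)⁻¹ ^ n‖ ≤ |z.im|⁻¹ ^ n := by
    rw [norm_pow]
    gcongr
    exact norm_inv_ofReal_sub_le hz x
  simp only [pow_add]
  exact (integrable_inv_ofReal_sub_sq hz).bdd_mul
    ((continuous_inv_ofReal_sub hz).pow n).aestronglyMeasurable (.of_forall hbound)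

lemma hasDerivAt_inv_ofReal_sub_pow (hz : z.im ≠ 0) (n : ℕ) (x : ℝ) :
    HasDerivAt (fun y : ℝ => ((y : ℂ) - z)⁻¹ ^ n) (-n * ((x : ℂ) - z)⁻¹ ^ (n + 1)) x := by
  have hsub : HasDerivAt (fun y : ℝ => (y : ℂ) - z) 1 x :=
    (hasDerivAt_id x).ofReal_comp.sub_const z
  refine ((hsub.fun_inv (ofReal_sub_ne_zero hz x)).fun_pow n).congr_deriv ?_
  rcases n with _ | n
  · simp
  · rw [Nat.add_sub_cancel, neg_div, one_div, ← inv_pow]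
    ring

lemma integral_inv_ofReal_sub_pow_add_two (hz : z.im ≠ 0) (n : ℕ) :
    ∫ x : ℝ, ((x : ℂ) - z)⁻¹ ^ (n + 2) = 0 := by
  have hlim : Tendsto (fun x : ℝ => ((x : ℂ) - z)⁻¹ ^ (n + 1)) (cocompact ℝ) (𝓝 0) := by
    simpa using (tendsto_inv_ofReal_sub_cocompact z).pow (n + 1)
  have hint := integral_of_hasDerivAt_of_tendsto (hasDerivAt_inv_ofReal_sub_pow hz (n + 1))
    ((integrable_inv_ofReal_sub_pow_add_two hz n).const_mul _)
    (hlim.mono_left atBot_le_cocompact) (hlim.mono_left atTop_le_cocompact)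
  rw [integral_const_mul, sub_zero] at hint
  exact (mul_eq_zero.mp hint).resolve_left (neg_ne_zero.mpr (Nat.cast_ne_zero.mpr n.succ_ne_zero))

lemma eval_mul_sq_eq_sum (p : ℂ[X]) (w : ℂ) :
    p.eval w * w ^ 2 = ∑ k ∈ p.support, p.coeff k * w ^ (k + 2) := by
  simp only [eval_eq_sum, sum_def, Finset.sum_mul, pow_add, mul_assoc]

lemma integrable_eval_inv_ofReal_sub_mul_sq (hz : z.im ≠ 0) (p : ℂ[X]) :
    Integrable fun x : ℝ => p.eval ((x : ℂ) - z)⁻¹ * ((x : ℂ) - z)⁻¹ ^ 2 := by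
  simp only [eval_mul_sq_eq_sum]
  exact integrable_finsetSum _ fun k _ =>
    (integrable_inv_ofReal_sub_pow_add_two hz k).const_mul _

lemma integral_eval_inv_ofReal_sub_mul_sq (hz : z.im ≠ 0) (p : ℂ[X]) :
    ∫ x : ℝ, p.eval ((x : ℂ) - z)⁻¹ * ((x : ℂ) - z)⁻¹ ^ 2 = 0 := by
  simp only [eval_mul_sq_eq_sum]
  rw [integral_finsetSum _ fun k _ => (integrable_inv_ofReal_sub_pow_add_two hz k).const_mul _]
  simp only [integral_const_mul, integral_inv_ofReal_sub_pow_add_two hz, mul_zero,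
    Finset.sum_const_zero]

end NonrealPole

lemma integrable_inv_one_add_ofReal_sq : Integrable fun x : ℝ => (1 + (x : ℂ) ^ 2)⁻¹ := by
  exact_mod_cast integrable_inv_one_add_sq.ofReal (𝕜 := ℂ)

lemma integral_inv_one_add_ofReal_sq : ∫ x : ℝ, (1 + (x : ℂ) ^ 2)⁻¹ = (Real.pi : ℂ) := by
  exact_mod_cast congrArg ofReal integral_univ_inv_one_add_sq

lemma integral_inv_one_add_sq_add_eval_inv_mul_sq {z w : ℂ} (hz : z.im ≠ 0) (hw : w.im ≠ 0)
    (c : ℂ) (p q : ℂ[X]) :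
    ∫ x : ℝ, (c * (1 + (x : ℂ) ^ 2)⁻¹ + p.eval ((x : ℂ) - z)⁻¹ * ((x : ℂ) - z)⁻¹ ^ 2
      + q.eval ((x : ℂ) - w)⁻¹ * ((x : ℂ) - w)⁻¹ ^ 2) = c * Real.pi := by
  have hc := integrable_inv_one_add_ofReal_sq.const_mul c
  have hp := integrable_eval_inv_ofReal_sub_mul_sq hz p
  rw [integral_add (hc.fun_add hp) (integrable_eval_inv_ofReal_sub_mul_sq hw q), integral_add hc hp,
    integral_const_mul, integral_inv_one_add_ofReal_sq, integral_eval_inv_ofReal_sub_mul_sq hz,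
    integral_eval_inv_ofReal_sub_mul_sq hw, add_zero, add_zero]

lemma integrand_eq_partial_fractions {t : ℂ} (hsub : t - I ≠ 0) (hadd : t - -I ≠ 0) :
    (t ^ 2 - 4 * I * t - 3) / ((t - I) ^ 4 * (1 + t ^ 2) ^ 2) =
      -(9 / 16) * (1 + t ^ 2)⁻¹
        + (7 / 16 - 5 * I / 8 * (t - I)⁻¹ - 3 / 4 * (t - I)⁻¹ ^ 2 + I / 2 * (t - I)⁻¹ ^ 3)
          * (t - I)⁻¹ ^ 2
        + 1 / 8 * (t - -I)⁻¹ ^ 2 := by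
  have hden : 1 + t ^ 2 = (t - I) * (t - -I) := by linear_combination I_sq
  have hnum : t ^ 2 - 4 * I * t - 3 = (t - I) * (t - I - 2 * I) := by
    linear_combination (-3) * I_sq
  have hshift : t - -I = t - I + 2 * I := by ring
  rw [hden, hnum]
  rw [hshift] at hadd ⊢
  generalize t - I = u at *
  field_simp
  grind [I_sq]

theorem stmt_12 :
    (1 / 2 : ℂ) * ∫ ξ : ℝ,
        ((ξ : ℂ) ^ 2 - 4 * I * (ξ : ℂ) - 3) /
          (((ξ : ℂ) - I) ^ 4 * (1 + (ξ : ℂ) ^ 2) ^ 2)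
      = -(9 / 32) * (Real.pi : ℂ) := by
  have hI : I.im ≠ 0 := by simp
  have hnegI : (-I).im ≠ 0 := by simp
  let p : ℂ[X] := C (7 / 16) - C (5 * I / 8) * X - C (3 / 4) * X ^ 2 + C (I / 2) * X ^ 3
  have hp (w : ℂ) : p.eval w = 7 / 16 - 5 * I / 8 * w - 3 / 4 * w ^ 2 + I / 2 * w ^ 3 := by
    simp only [p, eval_add, eval_sub, eval_mul, eval_pow, eval_C, eval_X]
  have hint := integral_inv_one_add_sq_add_eval_inv_mul_sq hI hnegI (-(9 / 16)) p (C (1 / 8))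
  simp only [hp, eval_C] at hint
  simp_rw [fun ξ : ℝ =>
    integrand_eq_partial_fractions (ofReal_sub_ne_zero hI ξ) (ofReal_sub_ne_zero hnegI ξ)]
  rw [hint]
  ring
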